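/- arXiv:1105.4369 — 2 statements merged into one kernel-verified Lean document; each statement's English description precedes it below -/
import Mathlib

section
/- Let D be a real number and let k be the natural number with k ≤ |D| < k+1. Then the minimum of the quantity Σ_{j∈ℤ} j² μ_j, taken over all families μ : ℤ → ℝ such that μ_j ≥ 0 for all j, the family (μ_j) is summable with Σ_{j∈ℤ} μ_j = 1, the family (j·μ_j) is summable with Σ_{j∈ℤ} j·μ_j = D, and the family (j²·μ_j) is summable, is attained and equals (2k+1)|D| − k − k². That is: every such μ satisfies Σ_{j∈ℤ} j² μ_j ≥ (2k+1)|D| − k − k², and there exists such a μ achieving equality. -/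
/-!
For an integer `m`, the secant of `x ↦ x²` through `m` and `m + 1` lies below the parabola at every
integer, because `j² - ((2m+1) j - m - m²) = (j - m)(j - m - 1)` is a product of consecutive
integers. Summing this against `μ` bounds the second moment below by the value of the secant at the
mean `D`. When `m ≤ D ≤ m + 1`, the bound is attained by the tuple with mean `D` supported on the
two contact points `m` and `m + 1`. Finally, the secants for `m` and `-(m + 1)` are reflections of
each other, so both signs of `D` give the same formula in `|D|`.
-/

/-- The secant line of `x ↦ x²` through `m` and `m + 1`, evaluated at `x`. The index `m` is real
so that natural and integer indices share one definition. -/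
def sqSecant (m x : ℝ) : ℝ :=
  (2 * m + 1) * x - m - m ^ 2

lemma sqSecant_neg (m x : ℝ) : sqSecant (-(m + 1)) (-x) = sqSecant m x := by
  unfold sqSecant
  ring

lemma sqSecant_le_sq (m j : ℤ) : sqSecant m j ≤ (j : ℝ) ^ 2 := by
  have h : ((j - m : ℤ) : ℝ) ≤ ((j - m : ℤ) : ℝ) ^ 2 := mod_cast Int.le_self_sq (j - m)
  push_cast at h
  unfold sqSecant
  linarith

lemma exists_int_sqSecant_eq_sqSecant_abs {D : ℝ} {k : ℤ} (hk : k ≤ |D|) (hk' : |D| ≤ k + 1) :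
    ∃ m : ℤ, m ≤ D ∧ D ≤ m + 1 ∧ sqSecant m D = sqSecant k |D| := by
  rcases abs_choice D with hD | hD <;> rw [hD] at hk hk' ⊢
  · exact ⟨k, hk, hk', rfl⟩
  · refine ⟨-(k + 1), ?_, ?_, ?_⟩
    · push_cast
      linarith
    · push_cast
      linarith
    · simpa using sqSecant_neg k (-D)

/-- A feasible tuple for `D`: a probability weight on `ℤ` with mean `D`. Convergence of the sums is
part of `HasSum`; finiteness of the second moment is not required. -/
structure IsFeasibleTuple (D : ℝ) (μ : ℤ → ℝ) : Prop where
  nonneg : ∀ j, 0 ≤ μ j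
  hasSum_one : HasSum μ 1
  hasSum_mean : HasSum (fun j : ℤ => (j : ℝ) * μ j) D

lemma IsFeasibleTuple.affine_le_of_hasSum {D a b E : ℝ} {μ f : ℤ → ℝ} (hμ : IsFeasibleTuple D μ)
    (hf : ∀ j : ℤ, a * j + b ≤ f j) (hE : HasSum (fun j => f j * μ j) E) : a * D + b ≤ E := by
  have haffine : HasSum (fun j : ℤ => (a * j + b) * μ j) (a * D + b) := by
    simpa [add_mul, mul_assoc] using (hμ.hasSum_mean.mul_left a).add (hμ.hasSum_one.mul_left b)
  exact hasSum_le (fun j => mul_le_mul_of_nonneg_right (hf j) (hμ.nonneg j)) haffine hE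

lemma IsFeasibleTuple.sqSecant_le_of_hasSum_sq {D E : ℝ} {μ : ℤ → ℝ} (hμ : IsFeasibleTuple D μ)
    (m : ℤ) (hE : HasSum (fun j : ℤ => (j : ℝ) ^ 2 * μ j) E) : sqSecant m D ≤ E := by
  have hsecant : ∀ j : ℤ, (2 * (m : ℝ) + 1) * j + (-m - m ^ 2) ≤ (j : ℝ) ^ 2 := fun j =>
    (sqSecant_le_sq m j).trans' (by unfold sqSecant; linarith)
  have hbound := hμ.affine_le_of_hasSum hsecant hE
  unfold sqSecant
  linarith

/-- The tuple on the adjacent integers `m` and `m + 1` with total mass `1` and mean `D`; it has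
nonnegative weights only for `m ≤ D ≤ m + 1`. -/
noncomputable def adjacentTuple (m : ℤ) (D : ℝ) : ℤ → ℝ :=
  Pi.single m (m + 1 - D) + Pi.single (m + 1) (D - m)

lemma hasSum_mul_single {ι R : Type*} [DecidableEq ι] [NonUnitalNonAssocSemiring R]
    [TopologicalSpace R] (f : ι → R) (i : ι) (c : R) :
    HasSum (fun j => f j * (Pi.single i c : ι → R) j) (f i * c) := by
  convert hasSum_single i fun j hj => ?_ using 1 <;> simp_all

lemma hasSum_mul_adjacentTuple (f : ℤ → ℝ) (m : ℤ) (D : ℝ) :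
    HasSum (fun j => f j * adjacentTuple m D j) (f m * (m + 1 - D) + f (m + 1) * (D - m)) := by
  simpa only [adjacentTuple, Pi.add_apply, mul_add] using
    (hasSum_mul_single f m (m + 1 - D)).add (hasSum_mul_single f (m + 1) (D - m))

lemma isFeasibleTuple_adjacentTuple {m : ℤ} {D : ℝ} (hm : m ≤ D) (hm' : D ≤ m + 1) :
    IsFeasibleTuple D (adjacentTuple m D) where
  nonneg := by
    have hleft : (0 : ℤ → ℝ) ≤ Pi.single m (m + 1 - D) := Pi.single_nonneg.2 (sub_nonneg.2 hm')
    have hright : (0 : ℤ → ℝ) ≤ Pi.single (m + 1) (D - m) := Pi.single_nonneg.2 (sub_nonneg.2 hm)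
    exact add_nonneg hleft hright
  hasSum_one := by simpa using hasSum_mul_adjacentTuple 1 m D
  hasSum_mean := by
    convert hasSum_mul_adjacentTuple (fun j => (j : ℝ)) m D using 1
    push_cast
    ring

lemma hasSum_sq_mul_adjacentTuple (m : ℤ) (D : ℝ) :
    HasSum (fun j : ℤ => (j : ℝ) ^ 2 * adjacentTuple m D j) (sqSecant m D) := by
  convert hasSum_mul_adjacentTuple (fun j => (j : ℝ) ^ 2) m D using 1
  unfold sqSecant
  push_cast
  ring

/-- For `D : ℝ` and `k : ℕ` with `k ≤ |D| < k+1`, the minimum of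
`∑ j² μ_j` over feasible tuples `μ` (nonnegative, summing to 1, with first moment `D`
and finite second moment) is attained and equals `(2k+1)|D| − k − k²`. -/
theorem multiplicity_minimization (D : ℝ) (k : ℕ)
    (hk1 : (k : ℝ) ≤ |D|) (hk2 : |D| < (k : ℝ) + 1) :
    (∀ μ : ℤ → ℝ, (∀ j, 0 ≤ μ j) → Summable μ → ∑' j : ℤ, μ j = 1 →
      Summable (fun j : ℤ => (j : ℝ) * μ j) → ∑' j : ℤ, (j : ℝ) * μ j = D →
      Summable (fun j : ℤ => (j : ℝ) ^ 2 * μ j) →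
      (2 * (k : ℝ) + 1) * |D| - (k : ℝ) - (k : ℝ) ^ 2 ≤ ∑' j : ℤ, (j : ℝ) ^ 2 * μ j) ∧
    (∃ μ : ℤ → ℝ, (∀ j, 0 ≤ μ j) ∧ Summable μ ∧ ∑' j : ℤ, μ j = 1 ∧
      Summable (fun j : ℤ => (j : ℝ) * μ j) ∧ ∑' j : ℤ, (j : ℝ) * μ j = D ∧
      Summable (fun j : ℤ => (j : ℝ) ^ 2 * μ j) ∧
      ∑' j : ℤ, (j : ℝ) ^ 2 * μ j = (2 * (k : ℝ) + 1) * |D| - (k : ℝ) - (k : ℝ) ^ 2) := by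
  obtain ⟨m, hm, hm', hsecant⟩ := exists_int_sqSecant_eq_sqSecant_abs (k := k)
    (mod_cast hk1) (mod_cast hk2.le)
  have hvalue : (2 * (k : ℝ) + 1) * |D| - k - (k : ℝ) ^ 2 = sqSecant m D := by
    rw [hsecant, sqSecant, Int.cast_natCast]
  rw [hvalue]
  constructor
  · intro μ hnonneg hsum hsum_eq hmean hmean_eq hsq
    have hμ : IsFeasibleTuple D μ := ⟨hnonneg, hsum_eq ▸ hsum.hasSum, hmean_eq ▸ hmean.hasSum⟩
    exact hμ.sqSecant_le_of_hasSum_sq m hsq.hasSum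
  · have hμ := isFeasibleTuple_adjacentTuple hm hm'
    have hsq := hasSum_sq_mul_adjacentTuple m D
    exact ⟨adjacentTuple m D, hμ.nonneg, hμ.hasSum_one.summable, hμ.hasSum_one.tsum_eq,
      hμ.hasSum_mean.summable, hμ.hasSum_mean.tsum_eq, hsq.summable, hsq.tsum_eq⟩
end

section
/- Let D be a real number that is not an integer, let d = ⌊D⌋ be the largest integer below D, and write D = α·d + (1−α)·(d+1) with α = d + 1 − D ∈ (0,1). Let μ : ℤ → ℝ satisfy: μ_j ≥ 0 for all j, Σ_{j∈ℤ} μ_j = 1 (absolutely convergent), Σ_{j∈ℤ} j·μ_j = D (absolutely convergent), and the family (j²·μ_j) is summable. Then Σ_{j∈ℤ} j² μ_j ≥ α·d² + (1−α)·(d+1)², and if equality holds then μ_d = α, μ_{d+1} = 1−α, and μ_j = 0 for all j ∉ {d, d+1}; i.e., the minimizing tuple is unique and is supported on the two integers nearest to D. -/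
/-!
The product `(j - d) (j - (d + 1))` is nonnegative at every integer `j` and vanishes only at
`j = d` and `j = d + 1`. By the two moment constraints its `μ`-average is
`∑ j² μ_j - (2d + 1) D + d (d + 1)`, which is exactly the gap in the asserted inequality.
If the gap is zero, every term of this nonnegative series vanishes, so `μ` lives on `{d, d + 1}`,
and the mass and the first moment determine the two remaining weights.
-/

lemma int_sub_mul_sub_add_one_nonneg (d j : ℤ) : 0 ≤ (j - d) * (j - (d + 1)) := by
  rcases le_or_gt j d with hle | hlt
  · exact mul_nonneg_of_nonpos_of_nonpos (by omega) (by omega)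
  · exact mul_nonneg (by omega) (by omega)

section TwoPoints

variable {ι R : Type*} [TopologicalSpace R]

lemma hasSum_sub_mul_sub_mul [CommRing R] [IsTopologicalRing R] {x w : ι → R} {m₀ m₁ m₂ : R}
    (a b : R) (h₀ : HasSum w m₀) (h₁ : HasSum (fun i => x i * w i) m₁)
    (h₂ : HasSum (fun i => x i ^ 2 * w i) m₂) :
    HasSum (fun i => (x i - a) * (x i - b) * w i) (m₂ - (a + b) * m₁ + a * b * m₀) := by
  refine ((h₂.sub (h₁.mul_left (a + b))).add (h₀.mul_left (a * b))).congr_fun fun i => ?_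
  ring

section Ordered

variable [CommRing R] [IsTopologicalRing R] [PartialOrder R] [IsOrderedAddMonoid R]
  [OrderClosedTopology R] {x w : ι → R} {m₀ m₁ m₂ a b : R}

lemma add_mul_sub_mul_le_second_moment (hterm : ∀ i, 0 ≤ (x i - a) * (x i - b) * w i)
    (h₀ : HasSum w m₀) (h₁ : HasSum (fun i => x i * w i) m₁)
    (h₂ : HasSum (fun i => x i ^ 2 * w i) m₂) :
    (a + b) * m₁ - a * b * m₀ ≤ m₂ := by
  have hgap_nonneg := (hasSum_sub_mul_sub_mul a b h₀ h₁ h₂).nonneg hterm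
  rwa [← sub_nonneg, ← sub_add]

lemma weight_eq_zero_of_second_moment_eq [NoZeroDivisors R]
    (hterm : ∀ i, 0 ≤ (x i - a) * (x i - b) * w i)
    (h₀ : HasSum w m₀) (h₁ : HasSum (fun i => x i * w i) m₁)
    (h₂ : HasSum (fun i => x i ^ 2 * w i) m₂) (heq : m₂ = (a + b) * m₁ - a * b * m₀)
    {i : ι} (ha : x i ≠ a) (hb : x i ≠ b) : w i = 0 := by
  have hgap : HasSum (fun i => (x i - a) * (x i - b) * w i) 0 := by
    have hgap_zero : m₂ - (a + b) * m₁ + a * b * m₀ = 0 := by linear_combination heq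
    exact hgap_zero ▸ hasSum_sub_mul_sub_mul a b h₀ h₁ h₂
  have hterm_zero := congrFun ((hasSum_zero_iff_of_nonneg hterm).mp hgap) i
  exact (mul_eq_zero.mp hterm_zero).resolve_left
    (mul_ne_zero (sub_ne_zero.mpr ha) (sub_ne_zero.mpr hb))

end Ordered

lemma add_eq_of_hasSum_of_eq_zero_off_pair [AddCommMonoid R] [T2Space R] {f : ι → R} {s : R}
    {i k : ι} (hik : i ≠ k) (hf : HasSum f s) (hoff : ∀ l, l ≠ i → l ≠ k → f l = 0) :
    f i + f k = s := by
  classical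
  have hpair : HasSum f (∑ l ∈ {i, k}, f l) := hasSum_sum_of_ne_finset_zero fun l hl => by
    simp only [Finset.mem_insert, Finset.mem_singleton, not_or] at hl
    exact hoff l hl.1 hl.2
  rw [← Finset.sum_pair hik]
  exact hpair.unique hf

lemma sub_mul_weight_eq_of_eq_zero_off_pair [CommRing R] [T2Space R] {x w : ι → R} {m₀ m₁ : R}
    {i k : ι} (hik : i ≠ k) (h₀ : HasSum w m₀) (h₁ : HasSum (fun l => x l * w l) m₁)
    (hoff : ∀ l, l ≠ i → l ≠ k → w l = 0) :
    (x k - x i) * w i = x k * m₀ - m₁ := by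
  have hmass : w i + w k = m₀ := add_eq_of_hasSum_of_eq_zero_off_pair hik h₀ hoff
  have hmoment : x i * w i + x k * w k = m₁ :=
    add_eq_of_hasSum_of_eq_zero_off_pair hik h₁ fun l hi hk => by rw [hoff l hi hk, mul_zero]
  linear_combination x k * hmass - hmoment

end TwoPoints

theorem noninteger_vorticity_minimizer_general (d : ℤ) {D α M : ℝ} (hα : α = (d : ℝ) + 1 - D)
    {μ : ℤ → ℝ} (hpos : ∀ j, j ≠ d → j ≠ d + 1 → 0 ≤ μ j) (hmass : HasSum μ 1)
    (hmom1 : HasSum (fun j : ℤ => (j : ℝ) * μ j) D)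
    (hmom2 : HasSum (fun j : ℤ => (j : ℝ) ^ 2 * μ j) M) :
    α * (d : ℝ) ^ 2 + (1 - α) * ((d : ℝ) + 1) ^ 2 ≤ M ∧
    (M = α * (d : ℝ) ^ 2 + (1 - α) * ((d : ℝ) + 1) ^ 2 →
      μ d = α ∧ μ (d + 1) = 1 - α ∧ ∀ j : ℤ, j ≠ d → j ≠ d + 1 → μ j = 0) := by
  have hterm : ∀ j : ℤ, 0 ≤ ((j : ℝ) - d) * (j - (d + 1)) * μ j := by
    intro j
    rcases eq_or_ne j d with rfl | hd
    · simp
    rcases eq_or_ne j (d + 1) with rfl | hd'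
    · simp
    exact mul_nonneg (mod_cast int_sub_mul_sub_add_one_nonneg d j) (hpos j hd hd')
  have hsecant : α * (d : ℝ) ^ 2 + (1 - α) * ((d : ℝ) + 1) ^ 2 =
      (d + (d + 1)) * D - d * (d + 1) * 1 := by
    rw [hα]
    ring
  rw [hsecant]
  refine ⟨add_mul_sub_mul_le_second_moment hterm hmass hmom1 hmom2, fun heq => ?_⟩
  have hoff : ∀ j : ℤ, j ≠ d → j ≠ d + 1 → μ j = 0 := fun j hd hd' =>
    weight_eq_zero_of_second_moment_eq hterm hmass hmom1 hmom2 heq (mod_cast hd) (mod_cast hd')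
  have hne : d ≠ d + 1 := by omega
  have hweight_d : μ d = α := by
    have hweight := sub_mul_weight_eq_of_eq_zero_off_pair hne hmass hmom1 hoff
    push_cast at hweight
    linear_combination hweight - hα
  refine ⟨hweight_d, ?_, hoff⟩
  rw [← hweight_d, ← add_eq_of_hasSum_of_eq_zero_off_pair hne hmass hoff, add_sub_cancel_left]

/-- If `D` is not an integer, `d = ⌊D⌋` and `α = d + 1 − D ∈ (0,1)`, then any
feasible tuple `μ` for `D` satisfies `∑ j² μ_j ≥ α d² + (1−α)(d+1)²`, and in the case of
equality the unique minimizing tuple is supported on `{d, d+1}` with `μ_d = α`,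
`μ_{d+1} = 1 − α`. -/
theorem noninteger_vorticity_minimizer (D : ℝ) (hDnot : ¬ ∃ n : ℤ, D = (n : ℝ))
    (d : ℤ) (hd : d = ⌊D⌋) (α : ℝ) (hα : α = (d : ℝ) + 1 - D)
    (μ : ℤ → ℝ) (hpos : ∀ j, 0 ≤ μ j) (hsum : Summable μ) (hmass : ∑' j : ℤ, μ j = 1)
    (hsum1 : Summable (fun j : ℤ => (j : ℝ) * μ j))
    (hmom1 : ∑' j : ℤ, (j : ℝ) * μ j = D)
    (hsum2 : Summable (fun j : ℤ => (j : ℝ) ^ 2 * μ j)) :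
    α * (d : ℝ) ^ 2 + (1 - α) * ((d : ℝ) + 1) ^ 2 ≤ ∑' j : ℤ, (j : ℝ) ^ 2 * μ j ∧
    (∑' j : ℤ, (j : ℝ) ^ 2 * μ j = α * (d : ℝ) ^ 2 + (1 - α) * ((d : ℝ) + 1) ^ 2 →
      μ d = α ∧ μ (d + 1) = 1 - α ∧ ∀ j : ℤ, j ≠ d → j ≠ d + 1 → μ j = 0) := by
  exact noninteger_vorticity_minimizer_general d hα (fun j _ _ => hpos j) (hmass ▸ hsum.hasSum)
    (hmom1 ▸ hsum1.hasSum) hsum2.hasSum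
end
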